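/- arXiv:1603.07061 — 2 statements merged into one kernel-verified Lean document; each statement's English description precedes it below -/
import Mathlib

section
/- Let u : S¹ → ℝ be smooth with Fourier series u(θ) = Σ_{n∈ℤ} c_n e^{inθ}, c₀ = 0, and let F = −u·u″ − H(u·H(u″)). Let Φ(z) = Σ_{n=1}^∞ c_n zⁿ (holomorphic on the closed unit disc since u is smooth) and Υ(w,z) = (Φ(w) − Φ(z))/(w − z), extended holomorphically by Υ(z,z) = Φ′(z). Then for every θ, F(θ) = (1/π) ∫₀^{2π} |Υ(e^{iθ}, e^{iψ})|² dψ + (4/π) ∬_𝔻 |∂_w Υ(w, e^{iθ})|² dA(w), where dA is Lebesgue area measure on the open unit disc 𝔻. -/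
open MeasureTheory Real

/-- The `n`-th Fourier coefficient of a `2π`-periodic function `f : ℝ → ℝ`. -/
noncomputable def fourierC (f : ℝ → ℝ) (n : ℤ) : ℂ :=
  (1 / (2 * π)) * ∫ θ in (0:ℝ)..(2 * π), (f θ : ℂ) * Complex.exp (-Complex.I * (n : ℂ) * (θ : ℂ))

/-- The Hilbert transform on the circle, sending `Σ cₙ e^{inθ}` to `Σ (−i sgn n) cₙ e^{inθ}`. -/
noncomputable def hilbertT (f : ℝ → ℝ) (θ : ℝ) : ℝ :=
  (∑' n : ℤ, -Complex.I * ((n.sign : ℤ) : ℂ) * fourierC f n *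
    Complex.exp (Complex.I * (n : ℂ) * (θ : ℂ))).re

/-- The function `F = −u·u″ − H(u·H(u″))`. -/
noncomputable def Fmagic (u : ℝ → ℝ) (θ : ℝ) : ℝ :=
  -(u θ * deriv (deriv u) θ) - hilbertT (fun x => u x * hilbertT (deriv (deriv u)) x) θ

/-- The holomorphic function `Φ(z) = Σ_{n≥1} cₙ zⁿ` built from the positive Fourier
coefficients of `u`. -/
noncomputable def PhiOf (u : ℝ → ℝ) (z : ℂ) : ℂ :=
  ∑' n : ℕ, fourierC u ((n : ℤ) + 1) * z ^ (n + 1)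

/-- The difference quotient `Υ(w,z) = (Φ(w) − Φ(z))/(w − z)`, extended by `Υ(z,z) = Φ′(z)`. -/
noncomputable def UpsOf (u : ℝ → ℝ) (w z : ℂ) : ℂ :=
  if w = z then deriv (PhiOf u) z else (PhiOf u w - PhiOf u z) / (w - z)

/-!
Fix `z = e^{iθ}` and let `b_j = ∑ i, c_{i+j+1} z^i` be the Taylor coefficients of `Υ(·, z)` at `0`.
Parseval on the circle and on the disc turns the right-hand side into `2 ∑ j, (2j + 1) |b_j|²`.
Write `u″` as the real part of twice its positive-frequency part and expand `u·u″ + H(u·H(u″))` as a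
double Fourier series: at positive output frequencies the two Hilbert transforms contribute
`(-i)² = -1` and the terms cancel, and `F(θ)` becomes
`2 ∑ n, (n + 1)² Re (c_{n+1} conj (b_n + z b_{n+1}))`. Since `c_{n+1} = b_n - z b_{n+1}`, the real
part is `|b_n|² - |b_{n+1}|²`, and summation by parts with `(n + 1)² - n² = 2n + 1` concludes.
-/

open scoped ComplexConjugate

section OrthogonalSeries

variable {α ι 𝕜 : Type*} [MeasurableSpace α] {μ : Measure α} [IsFiniteMeasure μ] [Countable ι]
  [DecidableEq ι] [RCLike 𝕜]

theorem hasSum_integral_norm_sq_tsum_of_orthogonal {φ : ι → α → 𝕜} {c : ι → ℝ}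
    (hφ : ∀ i, AEStronglyMeasurable (φ i) μ) (hφ_le : ∀ i, ∀ᵐ x ∂μ, ‖φ i x‖ ≤ 1)
    (horth : ∀ i j, ∫ x, conj (φ i x) * φ j x ∂μ = if i = j then (c i : 𝕜) else 0)
    {b : ι → 𝕜} (hb : Summable fun i => ‖b i‖) :
    HasSum (fun i => c i * ‖b i‖ ^ 2) (∫ x, ‖∑' i, b i * φ i x‖ ^ 2 ∂μ) := by
  have hterm_le : ∀ᵐ x ∂μ, ∀ i, ‖b i * φ i x‖ ≤ ‖b i‖ := by
    filter_upwards [ae_all_iff.2 hφ_le] with x hx i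
    rw [norm_mul]
    exact mul_le_of_le_one_right (norm_nonneg _) (hx i)
  have hexpand : ∀ᵐ x ∂μ, HasSum
      (fun p : ι × ι => conj (b p.1 * φ p.1 x) * (b p.2 * φ p.2 x))
      ((‖∑' i, b i * φ i x‖ ^ 2 : ℝ) : 𝕜) := by
    filter_upwards [hterm_le] with x hx
    have hs : Summable fun i => ‖b i * φ i x‖ := .of_nonneg_of_le (fun _ => norm_nonneg _) hx hb
    have hs' : Summable fun i => ‖conj (b i * φ i x)‖ := by simpa only [RCLike.norm_conj] using hs
    have hprod := (summable_mul_of_summable_norm hs' hs).hasSum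
    rwa [← tsum_mul_tsum_of_summable_norm hs' hs, ← RCLike.conj_tsum, RCLike.conj_mul,
      ← RCLike.ofReal_pow] at hprod
  have hint : HasSum (fun p : ι × ι => ∫ x, conj (b p.1 * φ p.1 x) * (b p.2 * φ p.2 x) ∂μ)
      (∫ x, ((‖∑' i, b i * φ i x‖ ^ 2 : ℝ) : 𝕜) ∂μ) := by
    have hmeas (i : ι) : AEStronglyMeasurable (fun x => b i * φ i x) μ := (hφ i).const_mul (b i)
    refine hasSum_integral_of_dominated_convergence (fun p _ => ‖b p.1‖ * ‖b p.2‖)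
      (fun p => (RCLike.continuous_conj.comp_aestronglyMeasurable (hmeas p.1)).mul (hmeas p.2))
      (fun p => ?_) (.of_forall fun _ => summable_mul_of_summable_norm hb.norm hb.norm)
      (integrable_const _) hexpand
    filter_upwards [hterm_le] with x hx
    rw [norm_mul, RCLike.norm_conj]
    exact mul_le_mul (hx _) (hx _) (norm_nonneg _) (norm_nonneg _)
  have hinner (i j : ι) : ∫ x, conj (b i * φ i x) * (b j * φ j x) ∂μ =
      conj (b i) * b j * if i = j then (c i : 𝕜) else 0 := by
    rw [← horth, ← integral_const_mul]
    congr with x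
    rw [map_mul]; ring
  have hdiag : Function.Injective fun i : ι => (i, i) := fun i j h => congrArg Prod.fst h
  rw [← hdiag.hasSum_iff, integral_ofReal] at hint
  · refine RCLike.hasSum_ofReal (𝕜 := 𝕜) |>.1 (hint.congr_fun fun i => ?_)
    simp only [Function.comp_apply, hinner, if_true, RCLike.conj_mul]
    push_cast; ring
  · rintro ⟨i, j⟩ hij
    rw [hinner, if_neg fun h : i = j => hij ⟨i, by rw [h]⟩, mul_zero]

end OrthogonalSeries

section Circle

lemma cexp_I_mul_intCast_mul (n : ℤ) (x : ℝ) :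
    Complex.exp (Complex.I * n * x) = (Circle.exp x : ℂ) ^ n := by
  rw [Circle.coe_exp, ← Complex.exp_int_mul]
  ring_nf

lemma conj_circle_zpow (z : Circle) (n : ℤ) : conj ((z : ℂ) ^ n) = (z : ℂ) ^ (-n) := by
  rw [map_zpow₀, ← Circle.coe_inv_eq_conj, Circle.coe_inv, inv_zpow']

lemma norm_mul_circle_zpow (d : ℂ) (z : Circle) (n : ℤ) : ‖d * (z : ℂ) ^ n‖ = ‖d‖ := by
  rw [norm_mul, norm_zpow, Circle.norm_coe, one_zpow, mul_one]

lemma integral_circleExp_zpow (n : ℤ) (a : ℝ) :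
    ∫ x in a..a + 2 * π, (Circle.exp x : ℂ) ^ n = if n = 0 then (2 * π : ℂ) else 0 := by
  split_ifs with hn
  · simp [hn]
  · have hn' : Complex.I * n ≠ 0 := mul_ne_zero Complex.I_ne_zero (Int.cast_ne_zero.2 hn)
    simp_rw [← cexp_I_mul_intCast_mul]
    rw [integral_exp_mul_complex hn', cexp_I_mul_intCast_mul, cexp_I_mul_intCast_mul,
      Circle.exp_add_two_pi, sub_self, zero_div]

lemma integral_conj_circleExp_pow_mul_pow (m n : ℕ) (a : ℝ) :
    ∫ x in a..a + 2 * π, conj ((Circle.exp x : ℂ) ^ m) * (Circle.exp x : ℂ) ^ n =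
      if m = n then (2 * π : ℂ) else 0 := by
  have hmul (x : ℝ) : conj ((Circle.exp x : ℂ) ^ m) * (Circle.exp x : ℂ) ^ n =
      (Circle.exp x : ℂ) ^ (n - m : ℤ) := by
    rw [← zpow_natCast, conj_circle_zpow, ← zpow_natCast, ← zpow_add₀ (Circle.coe_ne_zero _),
      neg_add_eq_sub]
  simp_rw [hmul, integral_circleExp_zpow]
  simp only [sub_eq_zero, Nat.cast_inj, eq_comm]

theorem hasSum_integral_circle_norm_sq_tsum_pow {b : ℕ → ℂ} (hb : Summable fun j => ‖b j‖)
    (a : ℝ) :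
    HasSum (fun j => 2 * π * ‖b j‖ ^ 2)
      (∫ x in a..a + 2 * π, ‖∑' j, b j * (Circle.exp x : ℂ) ^ j‖ ^ 2) := by
  have ha : a ≤ a + 2 * π := by linarith [two_pi_pos]
  rw [intervalIntegral.integral_of_le ha]
  refine hasSum_integral_norm_sq_tsum_of_orthogonal
    (fun j => (by fun_prop : Continuous _).aestronglyMeasurable) (fun j => .of_forall (by simp))
    (fun j k => ?_) hb
  rw [← intervalIntegral.integral_of_le ha, integral_conj_circleExp_pow_mul_pow]
  push_cast; rfl

end Circle

section UnitDisc

theorem setIntegral_ball_eq_polarCoord {E : Type*} [NormedAddCommGroup E] [NormedSpace ℝ E]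
    (f : ℂ → E) (R : ℝ) :
    ∫ w in Metric.ball (0 : ℂ) R, f w =
      ∫ p in Set.Ioo 0 R ×ˢ Set.Ioo (-π) π, p.1 • f (p.1 * Circle.exp p.2) := by
  have hset : Set.Ioo 0 R ×ˢ Set.Ioo (-π) π =
      (Set.Ioi 0 ×ˢ Set.Ioo (-π) π) ∩ (Set.Iio R ×ˢ Set.univ) := by
    rw [Set.prod_inter_prod, Set.Ioi_inter_Iio, Set.inter_univ]
  rw [← integral_indicator Metric.isOpen_ball.measurableSet,
    ← Complex.integral_comp_polarCoord_symm, polarCoord_target, hset,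
    ← setIntegral_indicator (measurableSet_Iio.prod .univ)]
  refine setIntegral_congr_fun (measurableSet_Ioi.prod measurableSet_Ioo) ?_
  rintro ⟨r, t⟩ ⟨hr : 0 < r, -⟩
  have hpolar : Complex.polarCoord.symm (r, t) = r * Circle.exp t := by
    rw [Complex.polarCoord_symm_apply, Circle.coe_exp, Complex.exp_mul_I]
    push_cast; rfl
  have hmem : (r : ℂ) * Circle.exp t ∈ Metric.ball (0 : ℂ) R ↔ r < R := by
    rw [mem_ball_zero_iff, norm_mul, Circle.norm_coe, mul_one, Complex.norm_of_nonneg hr.le]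
  by_cases hrR : r < R <;> simp only [hpolar, Set.indicator, hmem, hrR, Set.mem_prod, Set.mem_Iio,
    Set.mem_univ, and_true, if_true, if_false, smul_zero]

lemma integral_ball_conj_pow_mul_pow (m n : ℕ) :
    ∫ w in Metric.ball (0 : ℂ) 1, conj (w ^ m) * w ^ n =
      if m = n then (π / (m + 1) : ℂ) else 0 := by
  have hpolar (p : ℝ × ℝ) : p.1 • (conj ((p.1 * Circle.exp p.2 : ℂ) ^ m) *
      (p.1 * Circle.exp p.2 : ℂ) ^ n) = ((p.1 ^ (m + n + 1) : ℝ) : ℂ) *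
        (conj ((Circle.exp p.2 : ℂ) ^ m) * (Circle.exp p.2 : ℂ) ^ n) := by
    simp only [Complex.real_smul, mul_pow, map_mul, map_pow, Complex.conj_ofReal]
    push_cast; ring
  have hangle : ∫ t in Set.Ioo (-π) π, conj ((Circle.exp t : ℂ) ^ m) * (Circle.exp t : ℂ) ^ n =
      if m = n then (2 * π : ℂ) else 0 := by
    rw [← integral_conj_circleExp_pow_mul_pow m n (-π), ← integral_Ioc_eq_integral_Ioo,
      ← intervalIntegral.integral_of_le (by linarith [pi_pos]),
      show -π + 2 * π = π by ring]
  have hradius : ∫ r in Set.Ioo (0 : ℝ) 1, ((r ^ (m + n + 1) : ℝ) : ℂ) = 1 / (m + n + 2) := by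
    rw [← integral_Ioc_eq_integral_Ioo, ← intervalIntegral.integral_of_le zero_le_one,
      intervalIntegral.integral_ofReal, integral_pow]
    push_cast
    ring_nf
  simp_rw [setIntegral_ball_eq_polarCoord, hpolar]
  rw [Measure.volume_eq_prod, setIntegral_prod_mul (fun r : ℝ => ((r ^ (m + n + 1) : ℝ) : ℂ))
    (fun t : ℝ => conj ((Circle.exp t : ℂ) ^ m) * (Circle.exp t : ℂ) ^ n), hradius, hangle]
  split_ifs with hmn
  · subst hmn
    have : (m : ℂ) + 1 ≠ 0 := Nat.cast_add_one_ne_zero m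
    rw [show (m + m + 2 : ℂ) = 2 * (m + 1) by ring]
    field_simp
  · rw [mul_zero]

theorem hasSum_integral_ball_norm_sq_tsum_pow {b : ℕ → ℂ} (hb : Summable fun j => ‖b j‖) :
    HasSum (fun j : ℕ => π / (j + 1) * ‖b j‖ ^ 2)
      (∫ w in Metric.ball (0 : ℂ) 1, ‖∑' j, b j * w ^ j‖ ^ 2) := by
  have : IsFiniteMeasure (volume.restrict (Metric.ball (0 : ℂ) 1)) :=
    isFiniteMeasure_restrict.2 measure_ball_lt_top.ne
  refine hasSum_integral_norm_sq_tsum_of_orthogonal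
    (fun j => (by fun_prop : Continuous _).aestronglyMeasurable)
    (fun j => ae_restrict_of_forall_mem Metric.isOpen_ball.measurableSet fun w hw => ?_)
    (fun j k => ?_) hb
  · rw [norm_pow]
    exact pow_le_one₀ (norm_nonneg _) (mem_ball_zero_iff.1 hw).le
  · rw [integral_ball_conj_pow_mul_pow]
    push_cast; rfl

end UnitDisc

section FourierCoefficients

lemma fourierC_eq_integral_zpow (f : ℝ → ℝ) (n : ℤ) :
    fourierC f n = 1 / (2 * π) * ∫ x in (0 : ℝ)..2 * π, (f x : ℂ) * (Circle.exp x : ℂ) ^ (-n) := by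
  simp_rw [fourierC, ← cexp_I_mul_intCast_mul, Int.cast_neg, neg_mul, mul_neg, neg_mul]

lemma hilbertT_eq_re_tsum_zpow (f : ℝ → ℝ) (θ : ℝ) :
    hilbertT f θ =
      (∑' n : ℤ, -Complex.I * n.sign * fourierC f n * (Circle.exp θ : ℂ) ^ n).re := by
  simp_rw [hilbertT, cexp_I_mul_intCast_mul]

lemma fourierC_neg (f : ℝ → ℝ) (n : ℤ) : fourierC f (-n) = conj (fourierC f n) := by
  rw [fourierC_eq_integral_zpow, fourierC_eq_integral_zpow, map_mul,
    ← intervalIntegral.intervalIntegral_conj]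
  simp only [map_mul, conj_circle_zpow, Complex.conj_ofReal, map_div₀, map_one, map_ofNat]

lemma exists_norm_fourierC_le (f : ℝ → ℝ) : ∃ M, ∀ n, ‖fourierC f n‖ ≤ M := by
  refine ⟨‖(1 / (2 * π) : ℂ)‖ * |∫ x in (0 : ℝ)..2 * π, ‖f x‖|, fun n => ?_⟩
  rw [fourierC_eq_integral_zpow, norm_mul]
  gcongr
  refine intervalIntegral.norm_integral_le_abs_integral_norm.trans_eq ?_
  simp only [norm_mul_circle_zpow, Complex.norm_real]

lemma periodic_deriv {E : Type*} [NormedAddCommGroup E] [NormedSpace ℝ E] {f : ℝ → E} {c : ℝ}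
    (hf : Function.Periodic f c) : Function.Periodic (deriv f) c := fun x => by
  rw [← deriv_comp_add_const, hf.funext]

theorem fourierC_deriv {f : ℝ → ℝ} (hf : ContDiff ℝ 1 f) (hper : Function.Periodic f (2 * π))
    (n : ℤ) : fourierC (deriv f) n = Complex.I * n * fourierC f n := by
  have hexp (x : ℝ) : HasDerivAt (fun x : ℝ => Complex.exp (-Complex.I * n * x))
      (Complex.exp (-Complex.I * n * x) * (-Complex.I * n)) x := by
    simpa using ((Complex.ofRealCLM.hasDerivAt (x := x)).const_mul (-Complex.I * n)).cexp
  have hf' (x : ℝ) : HasDerivAt (fun x : ℝ => (f x : ℂ)) ((deriv f x : ℝ) : ℂ) x :=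
    (hf.differentiable one_ne_zero x).hasDerivAt.ofReal_comp
  have : Continuous (deriv f) := hf.continuous_deriv le_rfl
  have hparts := intervalIntegral.integral_mul_deriv_eq_deriv_mul (a := 0) (b := 2 * π)
    (fun x _ => hexp x) (fun x _ => hf' x)
    (Continuous.intervalIntegrable (by fun_prop) _ _)
    (Continuous.intervalIntegrable (by fun_prop) _ _)
  have hexp_two_pi : Complex.exp (-Complex.I * n * (2 * π : ℝ)) = 1 :=
    Complex.exp_eq_one_iff.2 ⟨-n, by push_cast; ring⟩
  rw [hexp_two_pi, hper.eq] at hparts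
  simp only [Complex.ofReal_zero, mul_zero, Complex.exp_zero, sub_self, zero_sub] at hparts
  simp_rw [fourierC, mul_comm ((deriv f _ : ℝ) : ℂ), hparts, ← intervalIntegral.integral_neg,
    mul_left_comm (Complex.I * (n : ℂ)), ← intervalIntegral.integral_const_mul]
  congr with x
  ring

lemma fourierC_deriv_deriv {f : ℝ → ℝ} (hf : ContDiff ℝ 2 f)
    (hper : Function.Periodic f (2 * π)) (n : ℤ) :
    fourierC (deriv (deriv f)) n = -n ^ 2 * fourierC f n := by
  rw [fourierC_deriv hf.deriv' (periodic_deriv hper),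
    fourierC_deriv (hf.of_le one_le_two) hper]
  linear_combination (n : ℂ) ^ 2 * fourierC f n * Complex.I_sq

lemma norm_fourierC_deriv_deriv {f : ℝ → ℝ} (hf : ContDiff ℝ 2 f)
    (hper : Function.Periodic f (2 * π)) (n : ℤ) :
    ‖fourierC (deriv (deriv f)) n‖ = n ^ 2 * ‖fourierC f n‖ := by
  rw [fourierC_deriv_deriv hf hper, norm_mul, norm_neg, norm_pow, Complex.norm_intCast, sq_abs]

theorem summable_norm_fourierC {f : ℝ → ℝ} (hf : ContDiff ℝ 2 f)
    (hper : Function.Periodic f (2 * π)) : Summable fun n => ‖fourierC f n‖ := by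
  obtain ⟨M, hM⟩ := exists_norm_fourierC_le (deriv (deriv f))
  have hbound : Summable fun n : ℤ => M * (1 / (n : ℝ) ^ 2) :=
    (Real.summable_one_div_int_pow.2 one_lt_two).mul_left M
  refine hbound.of_norm_bounded_eventually ?_
  filter_upwards [Filter.eventually_cofinite_ne 0] with n hn
  have hn' : (0 : ℝ) < (n : ℝ) ^ 2 := by positivity
  rw [norm_norm, mul_one_div, le_div_iff₀ hn', mul_comm, ← norm_fourierC_deriv_deriv hf hper]
  exact hM n

theorem hasSum_fourierC_mul_zpow {f : ℝ → ℝ} (hf : Continuous f)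
    (hper : Function.Periodic f (2 * π)) (hsum : Summable fun n => ‖fourierC f n‖) (x : ℝ) :
    HasSum (fun n => fourierC f n * (Circle.exp x : ℂ) ^ n) (f x : ℂ) := by
  have : Fact (0 < 2 * π) := ⟨two_pi_pos⟩
  have hper' : Function.Periodic (fun x => (f x : ℂ)) (2 * π) := fun x => by simp only [hper x]
  let g : C(AddCircle (2 * π), ℂ) :=
    ⟨hper'.lift, continuous_coinduced_dom.2 (Complex.continuous_ofReal.comp hf)⟩
  have hg (x : ℝ) : g x = f x := hper'.lift_coe x
  have hfourier (n : ℤ) (x : ℝ) :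
      fourier n (x : AddCircle (2 * π)) = (Circle.exp x : ℂ) ^ n := by
    rw [fourier_coe_apply, ← cexp_I_mul_intCast_mul]
    congr 1
    push_cast; field_simp
  have hcoeff (n : ℤ) : fourierCoeff g n = fourierC f n := by
    simp_rw [fourierCoeff_eq_intervalIntegral g n 0, zero_add, fourierC_eq_integral_zpow, hg,
      hfourier, smul_eq_mul, Complex.real_smul, mul_comm (f _ : ℂ)]
    push_cast; rfl
  have hseries := has_pointwise_sum_fourier_series_of_summable (f := g)
    ((funext hcoeff : fourierCoeff g = fourierC f) ▸ hsum.of_norm) (x : AddCircle (2 * π))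
  simpa only [hcoeff, hfourier, hg, smul_eq_mul] using hseries

end FourierCoefficients

section TrigonometricSeries

variable {ι : Type*} {k : ι → ℤ} {d : ι → ℂ} {f : ℝ → ℝ}

lemma summable_mul_circle_zpow (k : ι → ℤ) (hd : Summable fun i => ‖d i‖) (z : Circle) :
    Summable fun i => d i * (z : ℂ) ^ k i :=
  .of_norm <| by simpa only [norm_mul_circle_zpow] using hd

theorem hasSum_sumElim_mul_circle_zpow (hd : Summable fun i => ‖d i‖) (z : Circle) :
    HasSum (fun i => Sum.elim (fun i => d i / 2) (fun i => conj (d i) / 2) i *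
        (z : ℂ) ^ Sum.elim k (-k) i) ((∑' i, d i * (z : ℂ) ^ k i).re : ℂ) := by
  have hsum := (summable_mul_circle_zpow k hd z).hasSum
  rw [Complex.re_eq_add_conj, add_div]
  refine .sum ((hsum.div_const 2).congr_fun fun i => ?_)
    (((Complex.hasSum_conj'.2 hsum).div_const 2).congr_fun fun i => ?_)
  · simp only [Function.comp_apply, Sum.elim_inl]
    ring
  · simp only [Function.comp_apply, Sum.elim_inr, Pi.neg_apply, map_mul, conj_circle_zpow]
    ring

lemma norm_intCast_sign_le_one (n : ℤ) : ‖(n.sign : ℂ)‖ ≤ 1 := by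
  rcases lt_trichotomy n 0 with hn | hn | hn
  · simp [Int.sign_eq_neg_one_of_neg hn]
  · simp [hn]
  · simp [Int.sign_eq_one_of_pos hn]

lemma summable_norm_neg_I_mul_sign_mul (k : ι → ℤ) (hd : Summable fun i => ‖d i‖) :
    Summable fun i => ‖-Complex.I * (k i).sign * d i‖ := by
  refine .of_norm_bounded hd fun i => ?_
  rw [norm_norm, norm_mul, norm_mul, norm_neg, Complex.norm_I, one_mul]
  exact mul_le_of_le_one_left (norm_nonneg _) (norm_intCast_sign_le_one _)

variable [Countable ι]

theorem hasSum_fourierC_of_eq_tsum (hd : Summable fun i => ‖d i‖)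
    (hf : ∀ x, (f x : ℂ) = ∑' i, d i * (Circle.exp x : ℂ) ^ k i) (n : ℤ) :
    HasSum (fun i => if k i = n then d i else 0) (fourierC f n) := by
  have hshift (i : ι) (x : ℝ) : d i * (Circle.exp x : ℂ) ^ k i * (Circle.exp x : ℂ) ^ (-n) =
      d i * (Circle.exp x : ℂ) ^ (k i - n) := by
    rw [mul_assoc, ← zpow_add₀ (Circle.coe_ne_zero _), sub_eq_add_neg]
  have hint : HasSum (fun i => ∫ x in (0 : ℝ)..2 * π, d i * (Circle.exp x : ℂ) ^ (k i - n))
      (∫ x in (0 : ℝ)..2 * π, (f x : ℂ) * (Circle.exp x : ℂ) ^ (-n)) := by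
    refine intervalIntegral.hasSum_integral_of_dominated_convergence (fun i _ => ‖d i‖)
      (fun i => (by fun_prop (disch := simp) : Continuous _).aestronglyMeasurable)
      (fun i => .of_forall fun x _ => (norm_mul_circle_zpow _ _ _).le)
      (.of_forall fun _ _ => hd) (by simp) (.of_forall fun x _ => ?_)
    simpa only [hf, hshift] using
      (summable_mul_circle_zpow k hd (Circle.exp x)).hasSum.mul_right ((Circle.exp x : ℂ) ^ (-n))
  rw [fourierC_eq_integral_zpow]
  refine (hint.mul_left (1 / (2 * π) : ℂ)).congr_fun fun i => ?_
  have horth := integral_circleExp_zpow (k i - n) 0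
  simp only [zero_add, sub_eq_zero] at horth
  have : (2 * π : ℂ) ≠ 0 := by exact_mod_cast two_pi_pos.ne'
  rw [intervalIntegral.integral_const_mul, horth]
  split_ifs
  · field_simp
  · simp only [mul_zero]

theorem hilbertT_of_eq_tsum (hd : Summable fun i => ‖d i‖)
    (hf : ∀ x, (f x : ℂ) = ∑' i, d i * (Circle.exp x : ℂ) ^ k i) (θ : ℝ) :
    hilbertT f θ =
      (∑' i, -Complex.I * (k i).sign * d i * (Circle.exp θ : ℂ) ^ k i).re := by
  have hsum := summable_mul_circle_zpow k (summable_norm_neg_I_mul_sign_mul k hd) (Circle.exp θ)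
  rw [hilbertT_eq_re_tsum_zpow, ← (hsum.hasSum.tsum_fiberwise k).tsum_eq]
  congr 2 with n
  have hcoeff : ∑' i : k ⁻¹' {n}, d i = fourierC f n := by
    rw [← (hasSum_fourierC_of_eq_tsum hd hf n).tsum_eq, tsum_subtype (k ⁻¹' {n}) d]
    simp only [Set.indicator, Set.mem_preimage, Set.mem_singleton_iff]
  rw [← hcoeff, ← tsum_mul_left, ← tsum_mul_right]
  refine tsum_congr ?_
  rintro ⟨i, rfl⟩
  ring

theorem hilbertT_of_eq_re_tsum (hd : Summable fun i => ‖d i‖)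
    (hf : ∀ x, f x = (∑' i, d i * (Circle.exp x : ℂ) ^ k i).re) (θ : ℝ) :
    hilbertT f θ =
      (∑' i, -Complex.I * (k i).sign * d i * (Circle.exp θ : ℂ) ^ k i).re := by
  have hd' : Summable fun i => ‖Sum.elim (fun i => d i / 2) (fun i => conj (d i) / 2) i‖ := by
    refine .sum _ ?_ ?_ <;>
    simpa [Function.comp_def] using hd.div_const 2
  have hsplit := hasSum_sumElim_mul_circle_zpow (summable_norm_neg_I_mul_sign_mul k hd)
    (k := k) (Circle.exp θ)
  rw [hilbertT_of_eq_tsum hd' (k := Sum.elim k (-k))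
    fun x => by rw [hf, (hasSum_sumElim_mul_circle_zpow hd _).tsum_eq],
    ← Complex.ofReal_re (∑' i, -Complex.I * (k i).sign * d i * (Circle.exp θ : ℂ) ^ k i).re,
    ← hsplit.tsum_eq]
  congr 2 with i
  rcases i with i | i
  · simp only [Sum.elim_inl]
    ring
  · simp only [Sum.elim_inr, Pi.neg_apply, Int.sign_neg, map_mul, map_neg, Complex.conj_I,
      map_intCast, Int.cast_neg]
    ring

end TrigonometricSeries

section PowerSeries

lemma summable_mul_pow_of_norm_le_one {c : ℕ → ℂ} (hc : Summable fun n => ‖c n‖) {z : ℂ}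
    (hz : ‖z‖ ≤ 1) : Summable fun n => c n * z ^ n := by
  refine .of_norm_bounded hc fun n => ?_
  rw [norm_mul, norm_pow]
  exact mul_le_of_le_one_right (norm_nonneg _) (pow_le_one₀ (norm_nonneg _) hz)

theorem hasDerivAt_tsum_mul_pow {b : ℕ → ℂ} (hb : Summable fun j : ℕ => (j + 1) * ‖b j‖) {w : ℂ}
    (hw : ‖w‖ < 1) :
    HasDerivAt (fun v => ∑' j, b j * v ^ j) (∑' j : ℕ, (j + 1) * b (j + 1) * w ^ j) w := by
  have hbound (j : ℕ) (v : ℂ) (hv : ‖v‖ ≤ 1) :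
      ‖b j * (j * v ^ (j - 1))‖ ≤ (j + 1) * ‖b j‖ := by
    rw [norm_mul, norm_mul, norm_pow, Complex.norm_natCast, mul_comm]
    gcongr
    exact (mul_le_of_le_one_right j.cast_nonneg (pow_le_one₀ (norm_nonneg _) hv)).trans
      (le_add_of_nonneg_right zero_le_one)
  have hderiv := hasDerivAt_tsum_of_isPreconnected hb Metric.isOpen_ball
    (convex_ball (0 : ℂ) 1).isPreconnected (fun j v _ => (hasDerivAt_pow j v).const_mul (b j))
    (fun j v hv => hbound j v (mem_ball_zero_iff.1 hv).le) (Metric.mem_ball_self one_pos)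
    (summable_of_ne_finset_zero (s := {0}) fun j hj => by
      rw [zero_pow (by simpa using hj), mul_zero])
    (mem_ball_zero_iff.2 hw)
  refine hderiv.congr_deriv ?_
  rw [(Summable.of_norm_bounded hb fun j => hbound j w hw.le).tsum_eq_zero_add]
  simp only [Nat.cast_zero, zero_mul, mul_zero, zero_add, Nat.cast_add_one, Nat.add_sub_cancel]
  exact tsum_congr fun j => by ring

theorem hasSum_integral_ball_norm_sq_deriv_tsum_pow {b : ℕ → ℂ}
    (hb : Summable fun j : ℕ => (j + 1) * ‖b j‖) :
    HasSum (fun j : ℕ => π * j * ‖b j‖ ^ 2)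
      (∫ w in Metric.ball (0 : ℂ) 1, ‖deriv (fun v => ∑' j, b j * v ^ j) w‖ ^ 2) := by
  have hsucc : Summable fun j : ℕ => ‖(j + 1 : ℂ) * b (j + 1)‖ := by
    refine .of_norm_bounded ((summable_nat_add_iff 1).2 hb) fun j => ?_
    rw [norm_norm, norm_mul, ← Nat.cast_add_one, Complex.norm_natCast]
    gcongr
    exact le_add_of_nonneg_right zero_le_one
  rw [setIntegral_congr_fun Metric.isOpen_ball.measurableSet fun w hw => by
    rw [(hasDerivAt_tsum_mul_pow hb (mem_ball_zero_iff.1 hw)).deriv]]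
  rw [← hasSum_nat_add_iff' 1]
  simp only [Finset.range_one, Finset.sum_singleton, Nat.cast_zero, mul_zero, zero_mul, sub_zero]
  refine (hasSum_integral_ball_norm_sq_tsum_pow hsucc).congr_fun fun j => ?_
  have hnorm : ‖(j + 1 : ℂ)‖ = j + 1 := by exact_mod_cast Complex.norm_natCast (j + 1)
  rw [norm_mul, hnorm]
  push_cast
  field_simp

end PowerSeries

/-- The Taylor coefficients at `0` of `w ↦ (Φ w - Φ z) / (w - z)`, where
`Φ w = ∑' n, c n * w ^ (n + 1)`. -/
noncomputable def diffQuotCoeff (c : ℕ → ℂ) (z : ℂ) (j : ℕ) : ℂ :=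
  ∑' i, c (i + j) * z ^ i

section DiffQuotCoeff

variable {c : ℕ → ℂ} {z w : ℂ}

lemma summable_norm_of_summable_sq_mul (hc : Summable fun n : ℕ => (n + 1) ^ 2 * ‖c n‖) :
    Summable fun n => ‖c n‖ :=
  hc.of_nonneg_of_le (fun _ => norm_nonneg _) fun n =>
    le_mul_of_one_le_left (norm_nonneg _) (one_le_pow₀ (by simp))

lemma summable_diffQuotCoeff_terms (hc : Summable fun n => ‖c n‖) (hz : ‖z‖ ≤ 1) (j : ℕ) :
    Summable fun i => c (i + j) * z ^ i :=
  summable_mul_pow_of_norm_le_one ((summable_nat_add_iff j).2 hc) hz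

lemma mul_diffQuotCoeff_succ (j : ℕ) :
    z * diffQuotCoeff c z (j + 1) = ∑' i, c (i + 1 + j) * z ^ (i + 1) := by
  rw [diffQuotCoeff, ← tsum_mul_left]
  exact tsum_congr fun i => by rw [add_right_comm, add_assoc i j]; ring

lemma diffQuotCoeff_eq_add_mul_succ (hc : Summable fun n => ‖c n‖) (hz : ‖z‖ ≤ 1) (j : ℕ) :
    diffQuotCoeff c z j = c j + z * diffQuotCoeff c z (j + 1) := by
  rw [mul_diffQuotCoeff_succ, diffQuotCoeff,
    (summable_diffQuotCoeff_terms hc hz j).tsum_eq_zero_add, zero_add, pow_zero, mul_one]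

lemma diffQuotCoeff_add_mul_succ (hc : Summable fun n => ‖c n‖) (hz : ‖z‖ ≤ 1) (n : ℕ) :
    diffQuotCoeff c z n + z * diffQuotCoeff c z (n + 1) =
      ∑' i : ℕ, (1 + (i : ℤ).sign) * (c (i + n) * z ^ i) := by
  have hterms := summable_diffQuotCoeff_terms hc hz n
  have hsign : Summable fun i : ℕ => ((i : ℤ).sign : ℂ) * (c (i + n) * z ^ i) := by
    refine .of_norm_bounded hterms.norm fun i => ?_
    rw [norm_mul]
    exact mul_le_of_le_one_left (norm_nonneg _) (norm_intCast_sign_le_one _)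
  simp_rw [add_mul, one_mul]
  rw [hterms.tsum_add hsign, hsign.tsum_eq_zero_add, mul_diffQuotCoeff_succ]
  have hsign_succ (i : ℕ) : ((i + 1 : ℕ) : ℤ).sign = 1 := Int.sign_eq_one_of_pos (by positivity)
  simp only [hsign_succ, diffQuotCoeff, Nat.cast_zero, Int.sign_zero, Int.cast_zero, Int.cast_one,
    zero_mul, zero_add, one_mul]

theorem summable_mul_norm_diffQuotCoeff (hc : Summable fun n : ℕ => (n + 1) ^ 2 * ‖c n‖)
    (hz : ‖z‖ ≤ 1) : Summable fun j : ℕ => (j + 1) * ‖diffQuotCoeff c z j‖ := by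
  have hpairs : Summable fun p : ℕ × ℕ => (p.1 + 1) * ‖c (p.2 + p.1)‖ := by
    rw [← Finset.HasAntidiagonal.sigmaAntidiagonalEquivProd.summable_iff,
      summable_sigma_of_nonneg fun _ => by dsimp; positivity]
    refine ⟨fun n => (hasSum_fintype _).summable, .of_nonneg_of_le
      (fun n => tsum_nonneg fun _ => by dsimp; positivity) (fun n => ?_) hc⟩
    have hterm (p : Finset.HasAntidiagonal.antidiagonal n) :
        ((p.1.1 : ℝ) + 1) * ‖c (p.1.2 + p.1.1)‖ ≤ (n + 1) * ‖c n‖ := by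
      have hp : p.1.1 + p.1.2 = n := Finset.HasAntidiagonal.mem_antidiagonal.1 p.2
      rw [add_comm p.1.2, hp]
      gcongr
      lia
    rw [tsum_fintype]
    refine (Finset.sum_le_card_nsmul _ _ _ fun p _ => hterm p).trans_eq ?_
    rw [Finset.card_univ, Fintype.card_coe, Finset.Nat.card_antidiagonal, nsmul_eq_mul]
    push_cast; ring
  refine .of_nonneg_of_le (fun j => by positivity) (fun j => ?_) hpairs.prod
  rw [tsum_mul_left (a := (j + 1 : ℝ))]
  gcongr
  refine tsum_of_norm_bounded
    ((summable_nat_add_iff j).2 (summable_norm_of_summable_sq_mul hc)).hasSum fun i => ?_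
  rw [norm_mul, norm_pow]
  exact mul_le_of_le_one_right (norm_nonneg _) (pow_le_one₀ (norm_nonneg _) hz)

lemma summable_norm_diffQuotCoeff (hc : Summable fun n : ℕ => (n + 1) ^ 2 * ‖c n‖) (hz : ‖z‖ ≤ 1) :
    Summable fun j => ‖diffQuotCoeff c z j‖ :=
  (summable_mul_norm_diffQuotCoeff hc hz).of_nonneg_of_le (fun _ => norm_nonneg _) fun j =>
    le_mul_of_one_le_left (norm_nonneg _) (by simp)

theorem sub_mul_tsum_diffQuotCoeff (hc : Summable fun n => ‖c n‖)
    (hb : Summable fun j => ‖diffQuotCoeff c z j‖) (hz : ‖z‖ ≤ 1) (hw : ‖w‖ ≤ 1) :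
    (w - z) * ∑' j, diffQuotCoeff c z j * w ^ j =
      ∑' n, c n * w ^ (n + 1) - ∑' n, c n * z ^ (n + 1) := by
  have hbw := summable_mul_pow_of_norm_le_one hb hw
  have hcw := summable_mul_pow_of_norm_le_one hc hw
  have hshift : w * ∑' j, diffQuotCoeff c z j * w ^ j = ∑' n, c n * w ^ (n + 1) +
      z * ∑' j, diffQuotCoeff c z (j + 1) * w ^ (j + 1) := by
    rw [← tsum_mul_left, ← tsum_mul_left,
      ← ((hcw.mul_left w).congr fun n => by ring).tsum_add
        (((summable_nat_add_iff 1).2 hbw).mul_left z)]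
    refine tsum_congr fun j => ?_
    rw [diffQuotCoeff_eq_add_mul_succ hc hz j]
    ring
  have hzero : ∑' n, c n * z ^ (n + 1) = z * diffQuotCoeff c z 0 := by
    rw [diffQuotCoeff, ← tsum_mul_left]
    exact tsum_congr fun n => by ring_nf
  have htail := hbw.tsum_eq_zero_add
  rw [pow_zero, mul_one] at htail
  rw [sub_mul, hshift, hzero, htail]
  ring

theorem hasSum_sq_mul_sub_succ {x : ℕ → ℝ} (hx : Summable fun j : ℕ => (j + 1) ^ 2 * x j) :
    HasSum (fun j : ℕ => (j + 1) ^ 2 * (x j - x (j + 1))) (∑' j : ℕ, (2 * j + 1) * x j) := by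
  have hx' : Summable fun j : ℕ => (j : ℝ) ^ 2 * x j := by
    refine .of_norm_bounded hx.norm fun j => ?_
    rw [norm_mul, norm_mul, norm_pow, norm_pow]
    gcongr
    exact_mod_cast j.le_succ
  have hsucc : HasSum (fun j : ℕ => ((j : ℝ) + 1) ^ 2 * x (j + 1))
      (∑' j : ℕ, (j : ℝ) ^ 2 * x j) := by
    simpa using (hasSum_nat_add_iff' 1).2 hx'.hasSum
  have hodd : ∑' j : ℕ, (2 * j + 1) * x j =
      ∑' j : ℕ, (j + 1) ^ 2 * x j - ∑' j : ℕ, (j : ℝ) ^ 2 * x j := by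
    rw [← hx.tsum_sub hx']
    exact tsum_congr fun j => by ring
  rw [hodd]
  exact (hx.hasSum.sub hsucc).congr_fun fun j => by ring

lemma re_sub_mul_conj_add (p q : ℂ) : ((p - q) * conj (p + q)).re = ‖p‖ ^ 2 - ‖q‖ ^ 2 := by
  rw [Complex.sq_norm, Complex.sq_norm, Complex.normSq_apply, Complex.normSq_apply]
  simp only [Complex.mul_re, Complex.conj_re, Complex.conj_im, Complex.add_re, Complex.add_im,
    Complex.sub_re, Complex.sub_im]
  ring

theorem hasSum_sq_mul_re_mul_conj_tsum (hc : Summable fun n : ℕ => (n + 1) ^ 2 * ‖c n‖)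
    (hz : ‖z‖ = 1) :
    HasSum (fun n : ℕ => (n + 1) ^ 2 *
        (c n * conj (∑' i : ℕ, (1 + (i : ℤ).sign) * (c (i + n) * z ^ i))).re)
      (∑' j : ℕ, (2 * j + 1) * ‖diffQuotCoeff c z j‖ ^ 2) := by
  have hc' := summable_norm_of_summable_sq_mul hc
  have hb := summable_mul_norm_diffQuotCoeff hc hz.le
  have hb_sq : Summable fun j : ℕ => (j + 1) ^ 2 * ‖diffQuotCoeff c z j‖ ^ 2 := by
    have hdiag : Function.Injective fun j : ℕ => (j, j) := fun _ _ h => congrArg Prod.fst h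
    refine ((summable_mul_of_summable_norm hb.norm hb.norm).comp_injective hdiag).congr
      fun j => ?_
    simp only [Function.comp_apply]
    ring
  refine (hasSum_sq_mul_sub_succ hb_sq).congr_fun fun n => ?_
  have hcn : c n = diffQuotCoeff c z n - z * diffQuotCoeff c z (n + 1) :=
    eq_sub_of_add_eq (diffQuotCoeff_eq_add_mul_succ hc' hz.le n).symm
  have hsucc : ‖diffQuotCoeff c z (n + 1)‖ = ‖z * diffQuotCoeff c z (n + 1)‖ := by
    rw [norm_mul, hz, one_mul]
  rw [← diffQuotCoeff_add_mul_succ hc' hz.le, hcn, re_sub_mul_conj_add, hsucc]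

end DiffQuotCoeff

section ProductWithHilbertTransform

variable {f g : ℝ → ℝ}

lemma summable_comp_natCast_add_one {E : Type*} [NormedAddCommGroup E] [CompleteSpace E]
    {a : ℤ → E} (ha : Summable a) : Summable fun n : ℕ => a (n + 1) :=
  ha.comp_injective fun m n h => by simpa using h

lemma eq_re_tsum_fourierC_nat (hg : Continuous g) (hper : Function.Periodic g (2 * π))
    (hsum : Summable fun n => ‖fourierC g n‖) (hmean : fourierC g 0 = 0) (x : ℝ) :
    g x = (∑' n : ℕ, 2 * fourierC g (n + 1) * (Circle.exp x : ℂ) ^ (n + 1 : ℤ)).re := by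
  have hseries := hasSum_fourierC_mul_zpow hg hper hsum x
  have hpos : HasSum (fun n : ℕ => fourierC g (n + 1) * (Circle.exp x : ℂ) ^ (n + 1 : ℤ))
      (∑' n : ℕ, fourierC g (n + 1) * (Circle.exp x : ℂ) ^ (n + 1 : ℤ)) :=
    (summable_comp_natCast_add_one hseries.summable).hasSum
  have hneg : HasSum (fun n : ℕ => fourierC g (-(n + 1)) * (Circle.exp x : ℂ) ^ (-(n + 1) : ℤ))
      (conj (∑' n : ℕ, fourierC g (n + 1) * (Circle.exp x : ℂ) ^ (n + 1 : ℤ))) :=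
    (Complex.hasSum_conj'.2 hpos).congr_fun fun n => by
      simp only [fourierC_neg, map_mul, conj_circle_zpow]
  have hvalue := hseries.unique (.of_add_one_of_neg_add_one hpos hneg)
  rw [hmean, zero_mul, add_zero, Complex.add_conj] at hvalue
  simp_rw [mul_assoc (2 : ℂ), tsum_mul_left]
  rw [← Complex.ofReal_inj, hvalue]
  simp

lemma mul_re_tsum_circle_zpow {ι κ : Type*} {a : ι → ℂ} {d : κ → ℂ} {k : ι → ℤ} {l : κ → ℤ}
    (ha : Summable fun i => ‖a i‖) (hd : Summable fun i => ‖d i‖) {s : ℝ} {z : Circle}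
    (hs : HasSum (fun i => a i * (z : ℂ) ^ k i) (s : ℂ)) :
    s * (∑' j, d j * (z : ℂ) ^ l j).re =
      (∑' p : ι × κ, a p.1 * d p.2 * (z : ℂ) ^ (k p.1 + l p.2)).re := by
  rw [← Complex.re_ofReal_mul, ← hs.tsum_eq, tsum_mul_tsum_of_summable_norm
    (by simpa only [norm_mul_circle_zpow] using ha) (by simpa only [norm_mul_circle_zpow] using hd)]
  congr 2 with p
  rw [zpow_add₀ (Circle.coe_ne_zero z)]
  ring

lemma norm_one_sub_intCast_sign_le_two (n : ℤ) : ‖1 - (n.sign : ℂ)‖ ≤ 2 := by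
  linarith [norm_sub_le (1 : ℂ) n.sign, norm_one (α := ℂ), norm_intCast_sign_le_one n]

theorem hasSum_mul_tsum_one_add_sign_mul {a : ℤ → ℂ} {d : ℕ → ℂ}
    (ha : Summable fun n => ‖a n‖) (hd : Summable fun n => ‖d n‖) (z : Circle) :
    HasSum (fun n : ℕ => d n * ∑' i : ℕ, (1 + (i : ℤ).sign) *
        (a (-((i + n : ℕ) + 1)) * (z : ℂ) ^ (-i : ℤ)))
      (∑' p : ℤ × ℕ, (1 - (p.1 + (p.2 + 1)).sign) * (a p.1 * d p.2) *
        (z : ℂ) ^ (p.1 + (p.2 + 1))) := by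
  let F : ℤ × ℕ → ℂ := fun p =>
    (1 - (p.1 + (p.2 + 1)).sign) * (a p.1 * d p.2) * (z : ℂ) ^ (p.1 + (p.2 + 1))
  let e : ℕ × ℕ → ℤ × ℕ := fun p => (-((p.2 + p.1 : ℕ) + 1), p.1)
  have he : Function.Injective e := by
    rintro ⟨n, i⟩ ⟨n', i'⟩ h
    simp only [e, Prod.mk.injEq] at h ⊢
    lia
  have hrange : Function.support F ⊆ Set.range e := by
    rintro ⟨m, n⟩ hmn
    have hle : m + (n + 1) ≤ 0 := by
      contrapose! hmn
      simp [F, Int.sign_eq_one_of_pos hmn]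
    exact ⟨(n, (-(m + (n + 1))).toNat), by simp only [e, Prod.mk.injEq, and_true]; lia⟩
  have hF : Summable F := .of_norm_bounded ((ha.mul_norm hd).mul_left 2) fun p => by
    rw [norm_mul_circle_zpow, norm_mul]
    gcongr
    exact norm_one_sub_intCast_sign_le_two _
  have hFe (n i : ℕ) : F (e (n, i)) =
      d n * ((1 + (i : ℤ).sign) * (a (-((i + n : ℕ) + 1)) * (z : ℂ) ^ (-i : ℤ))) := by
    have hfreq : -(((i + n : ℕ) : ℤ) + 1) + (n + 1) = -(i : ℤ) := by lia
    simp only [F, e, hfreq, Int.sign_neg, Int.cast_neg]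
    ring
  have hFe_summable : Summable (F ∘ e) := hF.comp_injective he
  have hFe_sum : HasSum (F ∘ e) (∑' p, F p) := he.tsum_eq hrange ▸ hFe_summable.hasSum
  refine (hFe_sum.prod_fiberwise fun n => (hFe_summable.prod_factor n).hasSum).congr_fun fun n => ?_
  simp only [Function.comp_apply, hFe, tsum_mul_left]

theorem mul_add_hilbertT_mul_hilbertT (hf : Continuous f) (hg : Continuous g)
    (hfper : Function.Periodic f (2 * π)) (hgper : Function.Periodic g (2 * π))
    (hfsum : Summable fun n => ‖fourierC f n‖) (hgsum : Summable fun n => ‖fourierC g n‖)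
    (hgmean : fourierC g 0 = 0) (θ : ℝ) :
    f θ * g θ + hilbertT (fun x => f x * hilbertT g x) θ =
      (∑' p : ℤ × ℕ, (1 - (p.1 + (p.2 + 1)).sign) * (fourierC f p.1 * (2 * fourierC g (p.2 + 1))) *
        (Circle.exp θ : ℂ) ^ (p.1 + (p.2 + 1))).re := by
  have hd : Summable fun n : ℕ => ‖2 * fourierC g (n + 1)‖ := by
    simp_rw [norm_mul]
    exact (summable_comp_natCast_add_one hgsum).mul_left _
  have hg_eq := eq_re_tsum_fourierC_nat hg hgper hgsum hgmean
  have hHd := summable_norm_neg_I_mul_sign_mul (fun n : ℕ => (n + 1 : ℤ)) hd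
  have hf_series := hasSum_fourierC_mul_zpow hf hfper hfsum
  have hfHg (x : ℝ) := (congrArg (f x * ·) (hilbertT_of_eq_re_tsum hd hg_eq x)).trans
    (mul_re_tsum_circle_zpow hfsum hHd (hf_series x))
  have hfd := hfsum.mul_norm hd
  have hfHd := hfsum.mul_norm hHd
  rw [hilbertT_of_eq_re_tsum hfHd hfHg, hg_eq, mul_re_tsum_circle_zpow hfsum hd (hf_series θ),
    ← Complex.add_re, ← Summable.tsum_add (summable_mul_circle_zpow _ hfd _)
    (summable_mul_circle_zpow _ (summable_norm_neg_I_mul_sign_mul _ hfHd) _)]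
  congr 2 with p
  rw [Int.sign_eq_one_of_pos (by lia : 0 < (p.2 + 1 : ℤ)), Int.cast_one]
  linear_combination ((p.1 + (p.2 + 1)).sign : ℂ) *
    (fourierC f p.1 * (2 * fourierC g (p.2 + 1)) * (Circle.exp θ : ℂ) ^ (p.1 + (p.2 + 1 : ℤ))) *
      Complex.I_sq

theorem hasSum_mul_add_hilbertT_mul_hilbertT (hf : Continuous f) (hg : Continuous g)
    (hfper : Function.Periodic f (2 * π)) (hgper : Function.Periodic g (2 * π))
    (hfsum : Summable fun n => ‖fourierC f n‖) (hgsum : Summable fun n => ‖fourierC g n‖)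
    (hgmean : fourierC g 0 = 0) (θ : ℝ) :
    HasSum (fun n : ℕ => 2 * (fourierC g (n + 1) * conj (∑' i : ℕ, (1 + (i : ℤ).sign) *
        (fourierC f ((i + n : ℕ) + 1) * (Circle.exp θ : ℂ) ^ i))).re)
      (f θ * g θ + hilbertT (fun x => f x * hilbertT g x) θ) := by
  have hd := (summable_comp_natCast_add_one hgsum).mul_left 2
  rw [mul_add_hilbertT_mul_hilbertT hf hg hfper hgper hfsum hgsum hgmean]
  refine (Complex.hasSum_re (hasSum_mul_tsum_one_add_sign_mul hfsum
    (d := fun n => 2 * fourierC g (n + 1)) (by simpa using hd) _)).congr_fun fun n => ?_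
  rw [Complex.conj_tsum, ← Complex.re_ofReal_mul, Complex.ofReal_ofNat, mul_assoc]
  congr 4 with i
  rw [fourierC_neg, map_mul, map_mul, map_add, map_one, map_intCast, ← zpow_natCast,
    conj_circle_zpow]

end ProductWithHilbertTransform

section DifferenceQuotient

variable {u : ℝ → ℝ}

lemma UpsOf_comm_of_ne {w z : ℂ} (h : w ≠ z) : UpsOf u w z = UpsOf u z w := by
  rw [UpsOf, UpsOf, if_neg h, if_neg h.symm, ← neg_sub, ← neg_sub z, neg_div_neg_eq]

lemma UpsOf_eq_tsum_diffQuotCoeff (hc : Summable fun n : ℕ => (n + 1) ^ 2 * ‖fourierC u (n + 1)‖)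
    {w z : ℂ} (hw : ‖w‖ ≤ 1) (hz : ‖z‖ ≤ 1) (h : w ≠ z) :
    UpsOf u w z = ∑' j, diffQuotCoeff (fun n => fourierC u (n + 1)) z j * w ^ j := by
  have hb := summable_norm_diffQuotCoeff hc hz
  rw [UpsOf, if_neg h, div_eq_iff (sub_ne_zero.2 h), mul_comm, PhiOf, PhiOf,
    sub_mul_tsum_diffQuotCoeff (summable_norm_of_summable_sq_mul hc) hb hz hw]

lemma ae_circleExp_ne (z : Circle) : ∀ᵐ x : ℝ, Circle.exp x ≠ z := by
  obtain ⟨θ, rfl⟩ := Circle.exp_surjective z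
  filter_upwards [(Set.countable_range fun m : ℤ => θ + m * (2 * π)).ae_notMem volume] with x hx h
  obtain ⟨m, hm⟩ := Circle.exp_eq_exp.1 h
  exact hx ⟨m, hm.symm⟩

theorem hasSum_integral_circle_norm_sq_UpsOf
    (hc : Summable fun n : ℕ => (n + 1) ^ 2 * ‖fourierC u (n + 1)‖) (z : Circle) :
    HasSum (fun j => 2 * π * ‖diffQuotCoeff (fun n => fourierC u (n + 1)) z j‖ ^ 2)
      (∫ x in (0 : ℝ)..2 * π, ‖UpsOf u z (Circle.exp x)‖ ^ 2) := by
  have hb := summable_norm_diffQuotCoeff hc (Circle.norm_coe z).le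
  have hparseval := hasSum_integral_circle_norm_sq_tsum_pow hb 0
  rw [zero_add] at hparseval
  convert hparseval using 1
  refine intervalIntegral.integral_congr_ae ?_
  filter_upwards [ae_circleExp_ne z] with x hx _
  have hne : (Circle.exp x : ℂ) ≠ z := Circle.coe_injective.ne hx
  rw [← UpsOf_comm_of_ne hne, UpsOf_eq_tsum_diffQuotCoeff hc (Circle.norm_coe _).le
    (Circle.norm_coe _).le hne]

theorem hasSum_integral_ball_norm_sq_deriv_UpsOf
    (hc : Summable fun n : ℕ => (n + 1) ^ 2 * ‖fourierC u (n + 1)‖) (z : Circle) :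
    HasSum (fun j : ℕ => π * j * ‖diffQuotCoeff (fun n => fourierC u (n + 1)) z j‖ ^ 2)
      (∫ w in Metric.ball (0 : ℂ) 1, ‖deriv (fun w => UpsOf u w z) w‖ ^ 2) := by
  have hz := (Circle.norm_coe z).le
  convert hasSum_integral_ball_norm_sq_deriv_tsum_pow (summable_mul_norm_diffQuotCoeff hc hz)
    using 1
  refine setIntegral_congr_fun Metric.isOpen_ball.measurableSet fun w hw => ?_
  have hlocal : (fun w => UpsOf u w z) =ᶠ[nhds w]
      fun w => ∑' j, diffQuotCoeff (fun n => fourierC u (n + 1)) z j * w ^ j := by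
    filter_upwards [Metric.isOpen_ball.mem_nhds hw] with v hv
    have hv : ‖v‖ < 1 := mem_ball_zero_iff.1 hv
    refine UpsOf_eq_tsum_diffQuotCoeff hc hv.le hz ?_
    rintro rfl
    exact hv.ne (Circle.norm_coe z)
  simp only [hlocal.deriv_eq]

end DifferenceQuotient

lemma summable_sq_mul_norm_fourierC {u : ℝ → ℝ} (hu : ContDiff ℝ 2 u)
    (hper : Function.Periodic u (2 * π))
    (hsum : Summable fun n => ‖fourierC (deriv (deriv u)) n‖) :
    Summable fun n : ℕ => (n + 1) ^ 2 * ‖fourierC u (n + 1)‖ :=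
  (summable_comp_natCast_add_one hsum).congr fun n => by
    rw [norm_fourierC_deriv_deriv hu hper]
    push_cast; rfl

theorem hasSum_Fmagic {u : ℝ → ℝ} (hu : ContDiff ℝ 2 u) (hper : Function.Periodic u (2 * π))
    (hsum : Summable fun n => ‖fourierC (deriv (deriv u)) n‖) (θ : ℝ) :
    HasSum (fun n : ℕ => 2 * ((n + 1) ^ 2 * (fourierC u (n + 1) * conj (∑' i : ℕ,
        (1 + (i : ℤ).sign) * (fourierC u ((i + n : ℕ) + 1) * (Circle.exp θ : ℂ) ^ i))).re))
      (Fmagic u θ) := by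
  have hmean : fourierC (deriv (deriv u)) 0 = 0 := by
    rw [fourierC_deriv_deriv hu hper, Int.cast_zero, zero_pow two_ne_zero, neg_zero, zero_mul]
  have hproduct := hasSum_mul_add_hilbertT_mul_hilbertT hu.continuous
    hu.deriv'.continuous_deriv_one hper (periodic_deriv (periodic_deriv hper))
    (summable_norm_fourierC hu hper) hsum hmean θ
  rw [Fmagic, ← neg_add']
  refine hproduct.neg.congr_fun fun n => ?_
  rw [fourierC_deriv_deriv hu hper, ← Complex.re_ofReal_mul, ← mul_neg, ← Complex.neg_re]
  congr 2
  push_cast; ring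

theorem Fmagic_eq_difference_quotient_integrals_general {u : ℝ → ℝ} (hu : ContDiff ℝ 2 u)
    (hper : Function.Periodic u (2 * π))
    (hsum : Summable fun n => ‖fourierC (deriv (deriv u)) n‖) (θ : ℝ) :
    Fmagic u θ =
      (1 / π) * (∫ ψ in (0:ℝ)..(2 * π),
          ‖UpsOf u (Complex.exp (Complex.I * (θ : ℂ))) (Complex.exp (Complex.I * (ψ : ℂ)))‖ ^ 2)
      + (4 / π) * ∫ w in Metric.ball (0:ℂ) 1,
          ‖deriv (fun w' => UpsOf u w' (Complex.exp (Complex.I * (θ : ℂ)))) w‖ ^ 2 := by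
  simp_rw [mul_comm Complex.I, ← Circle.coe_exp]
  have hc := summable_sq_mul_norm_fourierC hu hper hsum
  have hcircle := (hasSum_integral_circle_norm_sq_UpsOf hc (Circle.exp θ)).mul_left (1 / π)
  have hdisc := (hasSum_integral_ball_norm_sq_deriv_UpsOf hc (Circle.exp θ)).mul_left (4 / π)
  have hsquares := (hasSum_sq_mul_re_mul_conj_tsum hc (Circle.norm_coe (Circle.exp θ))).mul_left 2
  rw [(hasSum_Fmagic hu hper hsum θ).unique hsquares, ← tsum_mul_left,
    ← (hcircle.add hdisc).tsum_eq]
  congr with j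
  field_simp
  ring

/-- Explicit formula
`F(θ) = (1/π) ∫₀^{2π} |Υ(e^{iθ},e^{iψ})|² dψ + (4/π) ∬_𝔻 |∂_w Υ(w,e^{iθ})|² dA`. -/
theorem Fmagic_eq_difference_quotient_integrals (u : ℝ → ℝ)
    (hu : ContDiff ℝ (⊤ : ℕ∞) u)
    (hper : ∀ θ : ℝ, u (θ + 2 * π) = u θ)
    (hmean : fourierC u 0 = 0) :
    ∀ θ : ℝ, Fmagic u θ =
      (1 / π) * (∫ ψ in (0:ℝ)..(2 * π),
          ‖UpsOf u (Complex.exp (Complex.I * (θ : ℂ))) (Complex.exp (Complex.I * (ψ : ℂ)))‖ ^ 2)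
      + (4 / π) * ∫ w in Metric.ball (0:ℂ) 1,
          ‖deriv (fun w' => UpsOf u w' (Complex.exp (Complex.I * (θ : ℂ)))) w‖ ^ 2 := by
  have hu'' : ContDiff ℝ 2 (deriv (deriv u)) := (contDiff_infty.1 hu 4).deriv'.deriv'
  exact Fmagic_eq_difference_quotient_integrals_general (contDiff_infty.1 hu 2) hper
    (summable_norm_fourierC hu'' (periodic_deriv (periodic_deriv hper)))
end

section
/- Fourier coefficients of f′·H(f′): let f : S¹ → ℝ be smooth with Fourier series f(θ) = Σ_{n∈ℤ} f_n e^{inθ}. For k ≥ 2 set h_k = Σ_{n=1}^{k−1} n(k−n) f_n f_{k−n}. Then the k-th Fourier coefficient of the product f′·H(f′) equals i·h_k for k ≥ 2, equals −i·conj(h_{|k|}) for k ≤ −2, and equals 0 for k ∈ {−1, 0, 1}. -/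
open MeasureTheory Real

/-- The coefficient `h_k = Σ_{n=1}^{k−1} n (k−n) f_n f_{k−n}` built from the Fourier
coefficients of `f`. -/
noncomputable def hCoef (f : ℝ → ℝ) (k : ℤ) : ℂ :=
  ∑ n ∈ Finset.Ioo (0:ℤ) k, (n : ℂ) * ((k : ℂ) - (n : ℂ)) * fourierC f n * fourierC f (k - n)

/-!
Pairing the terms `n` and `k - n` of the Cauchy product for the `k`-th coefficient of `g · H(g)`
replaces the multiplier `sgn n` by `(sgn n + sgn (k - n)) / 2`. For `k ≥ 0` it equals `1` when
`0 < n < k` and vanishes when `n < 0` or `n > k`, so only finitely many terms survive once `g` has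
mean zero. For `g = f'` each coefficient `g_n` is `i n f_n`, and negative `k` follow by conjugation.
-/

section FourierCoefficients

variable {g h : ℝ → ℝ} {c : ℤ → ℂ}

lemma conj_fourierC (g : ℝ → ℝ) (n : ℤ) : (starRingEnd ℂ) (fourierC g n) = fourierC g (-n) := by
  simp [fourierC, ← intervalIntegral.intervalIntegral_conj, ← Complex.exp_conj,
    Complex.conj_ofNat]

lemma fourierC_eq_fourierCoeffOn (g : ℝ → ℝ) (n : ℤ) :
    fourierC g n = fourierCoeffOn two_pi_pos (fun θ => (g θ : ℂ)) n := by
  have fourier_eq_exp (θ : ℝ) : fourier (-n) (θ : AddCircle (2 * π - 0)) =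
      Complex.exp (-Complex.I * n * θ) := by
    rw [fourier_coe_apply]
    congr 1
    push_cast
    field_simp
    ring
  simp only [fourierC, fourierCoeffOn_eq_integral, fourier_eq_exp, smul_eq_mul, mul_comm (g _ : ℂ),
    Complex.real_smul]
  push_cast
  rw [sub_zero]

lemma summable_norm_sq_fourierC (hg : MemLp g 2 (volume.restrict (Set.Ioc 0 (2 * π)))) :
    Summable fun n => ‖fourierC g n‖ ^ 2 := by
  simp only [fourierC_eq_fourierCoeffOn]
  exact (hasSum_sq_fourierCoeffOn two_pi_pos hg.ofReal).summable

lemma fourierC_deriv_s12 (hg : Differentiable ℝ g)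
    (hg' : IntervalIntegrable (deriv g) volume 0 (2 * π)) (hper : g (2 * π) = g 0) (n : ℤ) :
    fourierC (deriv g) n = Complex.I * n * fourierC g n := by
  have hasDerivAt_exp (x : ℝ) : HasDerivAt (fun x : ℝ => Complex.exp (-Complex.I * n * x))
      (-Complex.I * n * Complex.exp (-Complex.I * n * x)) x := by
    simpa [mul_comm] using ((hasDerivAt_id x).ofReal_comp.const_mul (-Complex.I * n)).cexp
  have exp_two_pi : Complex.exp (-Complex.I * n * (2 * π : ℝ)) = 1 :=
    Complex.exp_eq_one_iff.mpr ⟨-n, by push_cast; ring⟩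
  have by_parts := intervalIntegral.integral_mul_deriv_eq_deriv_mul
    (fun x _ => (hg x).hasDerivAt.ofReal_comp) (fun x _ => hasDerivAt_exp x)
    ⟨hg'.1.ofReal, hg'.2.ofReal⟩ (Continuous.intervalIntegrable (by fun_prop) _ _)
  simp only [exp_two_pi, hper, Complex.ofReal_zero, mul_zero, Complex.exp_zero, sub_self,
    mul_left_comm _ (-Complex.I * n), intervalIntegral.integral_const_mul] at by_parts
  unfold fourierC
  linear_combination (1 / (2 * π) : ℂ) * by_parts

lemma summable_fourierC_of_memLp_deriv (hg : Differentiable ℝ g)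
    (hg' : MemLp (deriv g) 2 (volume.restrict (Set.Ioc 0 (2 * π)))) (hper : g (2 * π) = g 0) :
    Summable (fourierC g) := by
  have hint : IntervalIntegrable (deriv g) volume 0 (2 * π) :=
    (intervalIntegrable_iff_integrableOn_Ioc_of_le two_pi_pos.le).mpr (hg'.integrable one_le_two)
  have majorant_summable :
      Summable fun n : ℤ => ‖fourierC (deriv g) n‖ ^ 2 + 1 / (n : ℝ) ^ 2 :=
    (summable_norm_sq_fourierC hg').add (Real.summable_one_div_int_pow.mpr one_lt_two)
  refine .of_norm_bounded_eventually majorant_summable ?_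
  filter_upwards [(Set.finite_singleton (0 : ℤ)).compl_mem_cofinite] with n hn
  have n_pos : 0 < |(n : ℝ)| := abs_pos.mpr (Int.cast_ne_zero.mpr hn)
  calc
    ‖fourierC g n‖ = ‖fourierC (deriv g) n‖ * (1 / |(n : ℝ)|) := by
      rw [fourierC_deriv_s12 hg hint hper]
      simp only [norm_mul, Complex.norm_I, Complex.norm_intCast]
      field_simp
    _ ≤ ‖fourierC (deriv g) n‖ ^ 2 + (1 / |(n : ℝ)|) ^ 2 := by
      nlinarith [sq_nonneg (‖fourierC (deriv g) n‖ - 1 / |(n : ℝ)|),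
        sq_nonneg (‖fourierC (deriv g) n‖ + 1 / |(n : ℝ)|)]
    _ = ‖fourierC (deriv g) n‖ ^ 2 + 1 / (n : ℝ) ^ 2 := by rw [one_div_pow, sq_abs]

lemma hasSum_fourierC_mul (hg : IntervalIntegrable g volume 0 (2 * π)) (hc : Summable c)
    (hh : ∀ θ : ℝ, HasSum (fun n : ℤ => c n * Complex.exp (Complex.I * n * θ)) (h θ)) (k : ℤ) :
    HasSum (fun n => c n * fourierC g (k - n)) (fourierC (fun θ => g θ * h θ) k) := by
  let summand (n : ℤ) (θ : ℝ) : ℂ := c n * (g θ * Complex.exp (-Complex.I * (k - n : ℤ) * θ))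
  have summand_meas (n : ℤ) :
      AEStronglyMeasurable (summand n) (volume.restrict (Set.uIoc 0 (2 * π))) :=
    (hg.def'.ofReal.aestronglyMeasurable.mul
      (Continuous.aestronglyMeasurable (by fun_prop))).const_mul _
  have norm_summand (n : ℤ) (θ : ℝ) : ‖summand n θ‖ = ‖c n‖ * |g θ| := by
    simp [summand, Complex.norm_exp]
  have hasSum_summand (θ : ℝ) : HasSum (fun n => summand n θ)
      (((g θ * h θ : ℝ) : ℂ) * Complex.exp (-Complex.I * k * θ)) := by
    convert! (hh θ).mul_left (g θ * Complex.exp (-Complex.I * k * θ)) using 1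
    · ext n
      have exp_split : Complex.exp (-Complex.I * (k - n : ℤ) * θ) =
          Complex.exp (-Complex.I * k * θ) * Complex.exp (Complex.I * n * θ) := by
        rw [← Complex.exp_add]
        push_cast
        ring_nf
      simp only [summand, exp_split]
      ring
    · push_cast
      ring
  have hasSum_integral := intervalIntegral.hasSum_integral_of_dominated_convergence
    (fun n θ => ‖c n‖ * |g θ|) summand_meas (fun n => .of_forall fun θ _ => (norm_summand n θ).le)
    (.of_forall fun θ _ => hc.norm.mul_right _)
    (by simpa only [tsum_mul_right] using hg.abs.const_mul _)
    (.of_forall fun θ _ => hasSum_summand θ)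
  convert! hasSum_integral.mul_left (1 / (2 * π) : ℂ) using 2 with n
  simp only [fourierC, summand, intervalIntegral.integral_const_mul]
  ring

end FourierCoefficients

lemma eq_sum_Ioo_of_hasSum_sign_mul {R : Type*} [CommRing R] [IsDomain R] [CharZero R]
    [TopologicalSpace R] [ContinuousAdd R] [T2Space R] {a : ℤ → R} {s : R} {k : ℤ} (hk : 0 ≤ k)
    (ha : a 0 = 0) (hs : HasSum (fun n : ℤ => (n.sign : R) * (a n * a (k - n))) s) :
    s = ∑ n ∈ Finset.Ioo 0 k, a n * a (k - n) := by
  have hasSum_symm : HasSum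
      (fun n : ℤ => ((n.sign + (k - n).sign : ℤ) : R) * (a n * a (k - n))) (s + s) := by
    convert hs.add ((Equiv.subLeft k).hasSum_iff.mpr hs) using 2 with n
    simp only [Function.comp_apply, Equiv.subLeft_apply, sub_sub_cancel]
    push_cast
    ring
  have zero_outside (n : ℤ) (hn : n ∉ Finset.Ioo 0 k) :
      ((n.sign + (k - n).sign : ℤ) : R) * (a n * a (k - n)) = 0 := by
    rw [Finset.mem_Ioo, not_and_or, not_lt, not_lt] at hn
    rcases eq_or_ne n 0 with rfl | n_ne_zero
    · simp [ha]
    rcases eq_or_ne n k with rfl | n_ne_k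
    · simp [ha]
    have signs_cancel : n.sign + (k - n).sign = 0 := by
      rcases hn with n_nonpos | k_le
      · rw [Int.sign_eq_neg_one_of_neg (by omega), Int.sign_eq_one_of_pos (by omega)]; rfl
      · rw [Int.sign_eq_one_of_pos (by omega), Int.sign_eq_neg_one_of_neg (by omega)]; rfl
    simp [signs_cancel]
  apply mul_left_cancel₀ (two_ne_zero (α := R))
  rw [two_mul, hasSum_symm.unique (hasSum_sum_of_ne_finset_zero zero_outside), Finset.mul_sum]
  refine Finset.sum_congr rfl fun n hn => ?_
  obtain ⟨n_pos, n_lt⟩ := Finset.mem_Ioo.mp hn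
  rw [Int.sign_eq_one_of_pos n_pos, Int.sign_eq_one_of_pos (sub_pos.mpr n_lt)]
  norm_num

section HilbertTransform

variable {g h : ℝ → ℝ}

lemma ofReal_hilbertT (h : ℝ → ℝ) (θ : ℝ) :
    (hilbertT h θ : ℂ) = ∑' n : ℤ, -Complex.I * (n.sign : ℤ) * fourierC h n *
      Complex.exp (Complex.I * n * θ) := by
  apply Complex.conj_eq_iff_re.mp
  rw [Complex.conj_tsum, ← (Equiv.neg ℤ).tsum_eq]
  congr 1 with n
  simp [conj_fourierC, ← Complex.exp_conj]

lemma summable_sign_mul_fourierC (hh : Summable (fourierC h)) :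
    Summable fun n : ℤ => -Complex.I * (n.sign : ℤ) * fourierC h n := by
  refine .of_norm_bounded hh.norm fun n => ?_
  have norm_sign_le : ‖((n.sign : ℤ) : ℂ)‖ ≤ 1 := by
    rcases n.sign_trichotomy with hn | hn | hn <;> simp [hn]
  simpa using mul_le_mul_of_nonneg_right norm_sign_le (norm_nonneg (fourierC h n))

lemma hasSum_hilbertT (hh : Summable (fourierC h)) (θ : ℝ) :
    HasSum (fun n : ℤ => -Complex.I * (n.sign : ℤ) * fourierC h n *
      Complex.exp (Complex.I * n * θ)) (hilbertT h θ) := by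
  rw [ofReal_hilbertT]
  refine (Summable.of_norm ?_).hasSum
  simpa [Complex.norm_exp] using (summable_sign_mul_fourierC hh).norm

lemma hasSum_fourierC_mul_hilbertT (hg : IntervalIntegrable g volume 0 (2 * π))
    (hh : Summable (fourierC h)) (k : ℤ) :
    HasSum (fun n : ℤ => -Complex.I * (n.sign : ℤ) * fourierC h n * fourierC g (k - n))
      (fourierC (fun θ => g θ * hilbertT h θ) k) :=
  hasSum_fourierC_mul hg (summable_sign_mul_fourierC hh) (hasSum_hilbertT hh) k

lemma fourierC_mul_hilbertT_self_of_nonneg (hg : IntervalIntegrable g volume 0 (2 * π))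
    (hsum : Summable (fourierC g)) (hmean : fourierC g 0 = 0) {k : ℤ} (hk : 0 ≤ k) :
    fourierC (fun θ => g θ * hilbertT g θ) k =
      -Complex.I * ∑ n ∈ Finset.Ioo 0 k, fourierC g n * fourierC g (k - n) := by
  have hasSum_sign : HasSum (fun n : ℤ => (n.sign : ℂ) * (fourierC g n * fourierC g (k - n)))
      (Complex.I * fourierC (fun θ => g θ * hilbertT g θ) k) := by
    convert! (hasSum_fourierC_mul_hilbertT hg hsum k).mul_left Complex.I using 2 with n
    linear_combination ((n.sign : ℂ) * fourierC g n * fourierC g (k - n)) * Complex.I_mul_I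
  rw [← eq_sum_Ioo_of_hasSum_sign_mul hk hmean hasSum_sign]
  linear_combination fourierC (fun θ => g θ * hilbertT g θ) k * Complex.I_mul_I

end HilbertTransform

section Derivative

variable {f : ℝ → ℝ} {k : ℤ}

lemma hCoef_of_le_one (f : ℝ → ℝ) (hk : k ≤ 1) : hCoef f k = 0 := by
  have Ioo_empty : Finset.Ioo 0 k = ∅ :=
    Finset.eq_empty_of_forall_notMem fun n hn => by rw [Finset.mem_Ioo] at hn; omega
  rw [hCoef, Ioo_empty, Finset.sum_empty]

lemma fourierC_deriv_mul_hilbertT_deriv_of_nonneg (hf : Differentiable ℝ f)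
    (hf' : IntervalIntegrable (deriv f) volume 0 (2 * π)) (hper : f (2 * π) = f 0)
    (hsum : Summable (fourierC (deriv f))) (hk : 0 ≤ k) :
    fourierC (fun θ => deriv f θ * hilbertT (deriv f) θ) k = Complex.I * hCoef f k := by
  have coeff_deriv := fourierC_deriv_s12 hf hf' hper
  rw [fourierC_mul_hilbertT_self_of_nonneg hf' hsum (by simp [coeff_deriv]) hk, hCoef,
    Finset.mul_sum, Finset.mul_sum]
  refine Finset.sum_congr rfl fun n _ => ?_
  rw [coeff_deriv, coeff_deriv]
  push_cast
  linear_combination (-Complex.I * n * (k - n) * fourierC f n * fourierC f (k - n)) *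
    Complex.I_mul_I

lemma fourierC_deriv_mul_hilbertT_deriv_of_nonpos (hf : Differentiable ℝ f)
    (hf' : IntervalIntegrable (deriv f) volume 0 (2 * π)) (hper : f (2 * π) = f 0)
    (hsum : Summable (fourierC (deriv f))) (hk : k ≤ 0) :
    fourierC (fun θ => deriv f θ * hilbertT (deriv f) θ) k =
      -Complex.I * (starRingEnd ℂ) (hCoef f (-k)) := by
  rw [← neg_neg k, ← conj_fourierC, neg_neg, fourierC_deriv_mul_hilbertT_deriv_of_nonneg hf hf' hper
    hsum (neg_nonneg.mpr hk), map_mul, Complex.conj_I]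

lemma periodic_deriv_s12 {T : ℝ} (hf : Function.Periodic f T) : Function.Periodic (deriv f) T :=
  fun θ => by rw [← deriv_comp_add_const, hf.funext]

lemma summable_fourierC_deriv_of_contDiff_two (hf : ContDiff ℝ 2 f)
    (hper : Function.Periodic f (2 * π)) : Summable (fourierC (deriv f)) := by
  have deriv_C1 : ContDiff ℝ 1 (deriv f) := (contDiff_succ_iff_deriv.mp hf).2.2
  have deriv2_cont : Continuous (deriv (deriv f)) := deriv_C1.continuous_deriv le_rfl
  have deriv2_memLp : MemLp (deriv (deriv f)) 2 (volume.restrict (Set.Ioc 0 (2 * π))) :=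
    (memLp_two_iff_integrable_sq deriv2_cont.aestronglyMeasurable).mpr
      (deriv2_cont.pow 2).integrableOn_Ioc
  exact summable_fourierC_of_memLp_deriv (deriv_C1.differentiable one_ne_zero) deriv2_memLp
    (periodic_deriv_s12 hper).eq

end Derivative

theorem fourierC_deriv_mul_hilbert_deriv_general (f : ℝ → ℝ) (hf : Differentiable ℝ f)
    (hf' : IntervalIntegrable (deriv f) volume 0 (2 * π)) (hper : f (2 * π) = f 0)
    (hsum : Summable (fourierC (deriv f))) :
    (∀ k : ℤ, 2 ≤ k →
      fourierC (fun θ => deriv f θ * hilbertT (deriv f) θ) k = Complex.I * hCoef f k) ∧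
    (∀ k : ℤ, k ≤ -2 →
      fourierC (fun θ => deriv f θ * hilbertT (deriv f) θ) k
        = -Complex.I * (starRingEnd ℂ) (hCoef f (-k))) ∧
    (∀ k : ℤ, k.natAbs ≤ 1 →
      fourierC (fun θ => deriv f θ * hilbertT (deriv f) θ) k = 0) := by
  have nonneg {k : ℤ} := fourierC_deriv_mul_hilbertT_deriv_of_nonneg (k := k) hf hf' hper hsum
  have nonpos {k : ℤ} := fourierC_deriv_mul_hilbertT_deriv_of_nonpos (k := k) hf hf' hper hsum
  refine ⟨fun k hk => nonneg (by omega), fun k hk => nonpos (by omega), fun k hk => ?_⟩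
  rcases le_total 0 k with hk₀ | hk₀
  · rw [nonneg hk₀, hCoef_of_le_one f (by omega), mul_zero]
  · rw [nonpos hk₀, hCoef_of_le_one f (by omega), map_zero, mul_zero]

/-- The Fourier coefficients of `f′·H(f′)`: the `k`-th coefficient equals
`i h_k` for `k ≥ 2`, `−i conj(h_{|k|})` for `k ≤ −2`, and `0` for `|k| ≤ 1`. -/
theorem fourierC_deriv_mul_hilbert_deriv (f : ℝ → ℝ)
    (hf : ContDiff ℝ (⊤ : ℕ∞) f)
    (hper : ∀ θ : ℝ, f (θ + 2 * π) = f θ) :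
    (∀ k : ℤ, 2 ≤ k →
      fourierC (fun θ => deriv f θ * hilbertT (deriv f) θ) k = Complex.I * hCoef f k) ∧
    (∀ k : ℤ, k ≤ -2 →
      fourierC (fun θ => deriv f θ * hilbertT (deriv f) θ) k
        = -Complex.I * (starRingEnd ℂ) (hCoef f (-k))) ∧
    (∀ k : ℤ, k.natAbs ≤ 1 →
      fourierC (fun θ => deriv f θ * hilbertT (deriv f) θ) k = 0) :=
  have hf₂ : ContDiff ℝ 2 f := mod_cast contDiff_infty.mp hf 2
  fourierC_deriv_mul_hilbert_deriv_general f (hf₂.differentiable two_ne_zero)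
    ((hf₂.continuous_deriv one_le_two).intervalIntegrable _ _) (Function.Periodic.eq hper)
    (summable_fourierC_deriv_of_contDiff_two hf₂ hper)
end
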